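/- arXiv:1409.3159 — 2 statements merged into one kernel-verified Lean document; each statement's English description precedes it below -/
import Mathlib

section
/- Let G be a connected graph with σ_2 ≥ t_{k+1} − 2k + 2 for some positive integer k. Then t_k ≥ t_{k+1} − 1. (Corollary 8) -/
open SimpleGraph

variable {V : Type*}

/-- A set of vertices is independent in `G`. -/
def IsIndSet (G : SimpleGraph V) (s : Set V) : Prop :=
  ∀ ⦃u⦄, u ∈ s → ∀ ⦃v⦄, v ∈ s → ¬ G.Adj u v

/-- The number of end-vertices (vertices of degree one) of a subgraph `H`. -/
noncomputable def endVertexCount {G : SimpleGraph V} (H : G.Subgraph) : ℕ :=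
  {v : V | v ∈ H.verts ∧ (H.neighborSet v).ncard = 1}.ncard

/-- `H` is a cycle; a single vertex and a single edge are regarded as
simple cycles of orders 1 and 2, respectively. -/
def IsCycleSubgraph {G : SimpleGraph V} (H : G.Subgraph) : Prop :=
  H.Connected ∧ (H.verts.ncard ≤ 2 ∨ ∀ v ∈ H.verts, (H.neighborSet v).ncard = 2)

/-- `H` is a `k`-ended tree in `G`: a tree with at most `k` end-vertices (leaves);
a cycle is regarded as a 1-ended tree. -/
def IsKEndedTree (G : SimpleGraph V) (k : ℕ) (H : G.Subgraph) : Prop :=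
  (H.coe.IsTree ∧ endVertexCount H ≤ k) ∨ (1 ≤ k ∧ IsCycleSubgraph H)

/-- `t k`: the order of a largest `k`-ended tree in `G`. -/
noncomputable def maxKEndedOrder (G : SimpleGraph V) (k : ℕ) : ℕ :=
  sSup {n | ∃ H : G.Subgraph, IsKEndedTree G k H ∧ H.verts.ncard = n}

/-- `σ m`: the minimum degree sum over independent sets of `m` vertices of `G`,
and `+∞` if the independence number of `G` is less than `m`. -/
noncomputable def minDegreeSum (G : SimpleGraph V) [Fintype V] [DecidableRel G.Adj]
    (m : ℕ) : ℕ∞ :=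
  ⨅ s ∈ {s : Finset V | s.card = m ∧ IsIndSet G ↑s}, (∑ v ∈ s, G.degree v : ℕ∞)

/-!
Suppose that a largest `(k + 1)`-ended tree `T` has at least two vertices more than any `k`-ended
tree. Then `T` is a genuine tree with exactly `k + 1` leaves, and no two of them are adjacent in
`G`: adding such an edge closes a cycle, which is either Hamiltonian on `T` or can be reopened
next to a branch vertex so that a leaf is lost. By maximality all neighbours of a leaf lie in `T`.

Fix two leaves `x ≠ y`, root `T` at `x`, and let `u` be a `G`-neighbour of `x` or a leaf other
than `x` and `y`, with parent `v`. If `v ≠ x`, exchanging the edge `uv` for `ux`, respectively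
deleting the leaf `u`, leaves a tree which misses at most one vertex of `T` and whose leaves are
among `v` and `k` leaves of `T`. Since this tree has more than `t_k` vertices, `v` must be one of
its leaves and cannot be adjacent to the leaf `y`. Since the leaf `x` has a single child, the
parent map is injective on all these vertices `u`, and its image avoids `N(y)` and the leaves
other than `x`. Counting gives `d(x) + (k - 1) + d(y) + k ≤ t_{k+1}`, against the bound on `σ_2`.
-/

section Trees

variable {W : Type*} {T K : SimpleGraph W} {a b c d u v z : W}

/-- The leaves of `T`, encoded as the vertices of degree at most one; in a connected graph with
at least two vertices these are the end-vertices. -/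
def leafSet (T : SimpleGraph W) : Set W :=
  {v | (T.neighborSet v).Subsingleton}

lemma eq_or_eq_of_adj_of_mem_leafSet (hT : T.Preconnected) (ha : a ∈ leafSet T)
    (hb : b ∈ leafSet T) (hab : T.Adj a b) (w : W) : w = a ∨ w = b := by
  by_contra hw
  obtain ⟨P⟩ := hT a w
  obtain ⟨e, -, h_in, h_out⟩ := P.exists_boundary_dart {a, b} (Or.inl rfl) hw
  have hadj := e.adj
  rcases h_in with h | h <;> rw [h] at hadj
  · exact h_out (Or.inr (ha hadj hab))
  · exact h_out (Or.inl (hb hadj hab.symm))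

/-- The graph obtained from `T` by deleting the edge `cd` and adding the edge `ab`. -/
def exchangeEdge (T : SimpleGraph W) (a b c d : W) : SimpleGraph W :=
  T.deleteEdges {s(c, d)} ⊔ edge a b

lemma exchangeEdge_adj : (exchangeEdge T a b c d).Adj u v ↔
    T.Adj u v ∧ s(u, v) ≠ s(c, d) ∨ s(u, v) = s(a, b) ∧ u ≠ v := by
  simp only [exchangeEdge, sup_adj, deleteEdges_adj, Set.mem_singleton_iff, edge_adj, Sym2.eq_iff]
  grind

lemma exchangeEdge_le (hTK : T ≤ K) (hab : K.Adj a b) : exchangeEdge T a b c d ≤ K :=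
  sup_le ((deleteEdges_le _).trans hTK) ((edge_le_iff K).2 (Or.inr hab))

lemma not_reachable_deleteEdges_of_mem_edges (hT : T.IsAcyclic) {P : T.Walk a b} (hP : P.IsPath)
    (hcd : s(c, d) ∈ P.edges) : ¬ (T.deleteEdges {s(c, d)}).Reachable a b := by
  intro h
  obtain ⟨Q, hQ⟩ := h.exists_isPath
  have hQP : Q.mapLe (deleteEdges_le _) = P := congrArg Subtype.val <|
    (hT.subsingleton_path a b).elim ⟨_, hQ.mapLe (deleteEdges_le _)⟩ ⟨P, hP⟩
  rw [← hQP, Walk.edges_mapLe_eq_edges] at hcd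
  simpa using Q.adj_of_mem_edges hcd

lemma isTree_exchangeEdge (hT : T.IsTree) (hab : ¬ T.Adj a b) {P : T.Walk a b} (hP : P.IsPath)
    (hcd : s(c, d) ∈ P.edges) : (exchangeEdge T a b c d).IsTree := by
  have hne : a ≠ b := by
    rintro rfl
    simp [(Walk.isPath_iff_nil.1 hP).eq_nil] at hcd
  have hle : T ≤ T ⊔ edge a b := le_sup_left
  have hcycle : (Walk.cons (show (T ⊔ edge a b).Adj b a by simp [edge_adj, hne.symm])
      (P.mapLe hle)).IsCycle := by
    rw [Walk.cons_isCycle_iff, Walk.edges_mapLe_eq_edges]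
    exact ⟨hP.mapLe hle, fun h => hab (P.adj_of_mem_edges h).symm⟩
  have hconn : ((T ⊔ edge a b).deleteEdges {s(c, d)}).Connected :=
    (hT.connected.mono hle).connected_delete_edge_of_not_isBridge fun hbridge =>
      hbridge.notMem_edges_of_isCycle hcycle (by simp [hcd])
  refine ⟨hconn.mono fun u v h => ?_, IsAcyclic.sup_edge_of_not_reachable
    (not_reachable_deleteEdges_of_mem_edges hT.isAcyclic hP hcd)
    (hT.isAcyclic.anti (deleteEdges_le _))⟩
  simp only [exchangeEdge, deleteEdges_adj, sup_adj] at h ⊢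
  tauto

lemma leafSet_exchangeEdge_subset (hT : T.Preconnected) (hne : a ≠ b) (hab : ¬ T.Adj a b) :
    leafSet (exchangeEdge T a b c d) ⊆ (leafSet T \ {a, b}) ∪ {c, d} := by
  have := nontrivial_of_ne a b hne
  rintro v hv
  by_cases hcd : v ∈ ({c, d} : Set W)
  · exact Or.inr hcd
  have hmono : T.neighborSet v ⊆ (exchangeEdge T a b c d).neighborSet v := fun w hw =>
    exchangeEdge_adj.2 (Or.inl ⟨hw, by grind⟩)
  obtain ⟨w, hw⟩ := hT.exists_adj_of_nontrivial v
  refine Or.inl ⟨hv.anti hmono, ?_⟩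
  rintro (rfl | rfl)
  · have hwb : w = b := hv (hmono hw) (exchangeEdge_adj.2 (Or.inr ⟨rfl, hne⟩))
    exact hab (hwb ▸ hw)
  · have hwa : w = a := hv (hmono hw) (exchangeEdge_adj.2 (Or.inr ⟨Sym2.eq_swap, hne.symm⟩))
    exact hab (hwa ▸ hw).symm

lemma mem_leafSet_exchangeEdge (hv : v ∈ leafSet T) (hva : v ≠ a) (hvb : v ≠ b) :
    v ∈ leafSet (exchangeEdge T a b c d) := by
  refine hv.anti fun w hw => ?_
  rcases exchangeEdge_adj.1 hw with h | h
  · exact h.1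
  · grind

lemma subsingleton_neighborSet_sdiff_of_mem_leafSet_exchangeEdge
    (hc : c ∈ leafSet (exchangeEdge T a b c d)) : (T.neighborSet c \ {d}).Subsingleton := by
  refine hc.anti fun w hw => exchangeEdge_adj.2 (Or.inl ⟨hw.1, ?_⟩)
  have := hw.2
  grind

lemma leafSet_exchangeEdge_subset_insert (hT : T.Preconnected) (hne : a ≠ b) (hab : ¬ T.Adj a b)
    (hb : b ∉ leafSet T) : leafSet (exchangeEdge T a b v b) ⊆ insert v (leafSet T \ {a}) := by
  intro w hw
  rcases leafSet_exchangeEdge_subset hT hne hab hw with h | rfl | rfl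
  · exact Or.inr ⟨h.1, fun hwa => h.2 (Or.inl hwa)⟩
  · exact Or.inl rfl
  · refine absurd (fun s hs t ht => ?_) hb
    have hv : ∀ r ∈ T.neighborSet w, r = v := by
      intro r hr
      by_contra hrv
      have hra : r = a := hw (exchangeEdge_adj.2 (Or.inl ⟨hr, by grind⟩))
        (exchangeEdge_adj.2 (Or.inr ⟨Sym2.eq_swap, hne.symm⟩))
      exact hab (hra ▸ hr).symm
    rw [hv s hs, hv t ht]

lemma exists_branch_of_isPath (hT : T.Preconnected) {P : T.Walk a b} (hP : P.IsPath) (hab : a ≠ b)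
    (ha : a ∈ leafSet T) (hb : b ∈ leafSet T) {w : W} (hw : w ∉ P.support) :
    ∃ c d, s(c, d) ∈ P.edges ∧ ¬ (T.neighborSet c \ {d}).Subsingleton := by
  obtain ⟨Q⟩ := hT a w
  obtain ⟨⟨⟨c, t⟩, hct⟩, -, hc, ht⟩ :=
    Q.exists_boundary_dart {v | v ∈ P.support} P.start_mem_support hw
  replace ht : t ∉ P.support := ht
  replace hct : T.Adj c t := hct
  have hnil : ¬ P.Nil := Walk.not_nil_of_ne hab
  have hca : c ≠ a := by
    rintro rfl
    exact ht (ha (P.adj_snd hnil) hct ▸ P.getVert_mem_support 1)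
  have hcb : c ≠ b := by
    rintro rfl
    exact ht (hb (P.adj_penultimate hnil).symm hct ▸ P.getVert_mem_support _)
  obtain ⟨i, rfl, hi⟩ := Walk.mem_support_iff_exists_getVert.1 hc
  have hi0 : i ≠ 0 := fun h => hca (h ▸ P.getVert_zero)
  have hil : i < P.length := hi.lt_of_ne fun h => hcb (h ▸ P.getVert_length)
  obtain ⟨s, d, hsd, hN⟩ :=
    Set.ncard_eq_two.1 (hP.ncard_neighborSet_toSubgraph_internal_eq_two hi0 hil)
  have hs : P.toSubgraph.Adj (P.getVert i) s := hN.ge (Or.inl rfl)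
  have hd : P.toSubgraph.Adj (P.getVert i) d := hN.ge (Or.inr rfl)
  have hd_mem : d ∈ P.support := (Walk.mem_verts_toSubgraph _).1 hd.snd_mem
  refine ⟨P.getVert i, d, Walk.adj_toSubgraph_iff_mem_edges.1 hd, fun h => ht ?_⟩
  have hts : t = s := h ⟨hct, ne_of_mem_of_not_mem hd_mem ht |>.symm⟩
    ⟨hs.adj_sub, hsd⟩
  exact hts ▸ (Walk.mem_verts_toSubgraph _).1 hs.snd_mem

lemma isTree_induce_compl_of_mem_leafSet (hT : T.IsTree) (hz : z ∈ leafSet T) (hzv : T.Adj z v) :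
    (T.induce {z}ᶜ).IsTree := by
  have := hz.finite.fintype
  refine ⟨hT.connected.induce_compl_singleton_of_degree_eq_one ?_, hT.isAcyclic.induce _⟩
  exact degree_eq_one_iff_existsUnique_adj.2 ⟨v, hzv, fun w hw => hz hw hzv⟩

lemma mem_leafSet_induce_compl_iff {v : ({z}ᶜ : Set W)} :
    v ∈ leafSet (T.induce {z}ᶜ) ↔ (T.neighborSet v \ {z}).Subsingleton :=
  ⟨fun h _ hs _ ht => congrArg Subtype.val (@h ⟨_, hs.2⟩ hs.1 ⟨_, ht.2⟩ ht.1),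
    fun h s hs t ht => Subtype.ext (h ⟨hs, s.2⟩ ⟨ht, t.2⟩)⟩

lemma leafSet_induce_compl_subset (hz : z ∈ leafSet T) (hzv : T.Adj z v) :
    leafSet (T.induce {z}ᶜ) ⊆ insert ⟨v, hzv.ne'⟩ ((↑) ⁻¹' (leafSet T \ {z})) := by
  intro w hw
  by_cases hwv : (w : W) = v
  · exact Or.inl (Subtype.ext hwv)
  have hz_nadj : z ∉ T.neighborSet w := fun h => hwv (hz (Adj.symm h) hzv)
  rw [mem_leafSet_induce_compl_iff, Set.sdiff_singleton_eq_self hz_nadj] at hw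
  exact Or.inr ⟨hw, w.2⟩

end Trees

section Parent

variable {W : Type*} {T : SimpleGraph W} {r u : W}

/-- The parent of `u` when the connected graph `T` is rooted at `r`: the second vertex of a
shortest walk from `u` to `r`. The parent of `r` itself is the junk value `r`. -/
noncomputable def parent (hT : T.Connected) (r u : W) : W :=
  (hT.exists_walk_length_eq_dist u r).choose.snd

lemma exists_isPath_mem_edges_parent (hT : T.Connected) (hu : u ≠ r) :
    ∃ P : T.Walk r u, P.IsPath ∧ s(parent hT r u, u) ∈ P.edges := by
  let P := (hT.exists_walk_length_eq_dist u r).choose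
  have hP : P.length = T.dist u r := (hT.exists_walk_length_eq_dist u r).choose_spec
  refine ⟨P.reverse, (P.isPath_of_length_eq_dist hP).reverse, ?_⟩
  rw [Walk.edges_reverse, List.mem_reverse, Sym2.eq_swap]
  exact P.mk_start_snd_mem_edges (Walk.not_nil_of_ne hu)

lemma adj_parent (hT : T.Connected) (hu : u ≠ r) : T.Adj u (parent hT r u) :=
  Walk.adj_snd (Walk.not_nil_of_ne hu)

lemma dist_parent_add_one (hT : T.Connected) (hu : u ≠ r) :
    T.dist (parent hT r u) r + 1 = T.dist u r := by
  let P := (hT.exists_walk_length_eq_dist u r).choose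
  have hP : P.length = T.dist u r := (hT.exists_walk_length_eq_dist u r).choose_spec
  have htail : P.tail.length + 1 = P.length := P.length_tail_add_one (Walk.not_nil_of_ne hu)
  have hle : T.dist (parent hT r u) r ≤ P.tail.length := dist_le P.tail
  have htri := hT.dist_triangle (u := u) (v := parent hT r u) (w := r)
  rw [dist_eq_one_iff_adj.2 (adj_parent hT hu)] at htri
  omega

lemma parent_eq_of_adj (hT : T.Connected) (h : T.Adj u r) : parent hT r u = r := by
  have hdist := dist_parent_add_one hT h.ne
  rw [dist_eq_one_iff_adj.2 h] at hdist
  exact hT.dist_eq_zero_iff.1 (by omega)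

lemma parent_parent_ne (hT : T.Connected) (hu : u ≠ r) (hpu : parent hT r u ≠ r) :
    parent hT r (parent hT r u) ≠ u := by
  intro h
  have h₁ := dist_parent_add_one hT hu
  have h₂ := dist_parent_add_one hT hpu
  rw [h] at h₂
  omega

lemma parent_notMem_leafSet (hT : T.Connected) (hu : u ≠ r) (hpu : parent hT r u ≠ r) :
    parent hT r u ∉ leafSet T := fun h =>
  parent_parent_ne hT hu hpu (h (adj_parent hT hpu) (adj_parent hT hu).symm)

lemma injOn_parent (hT : T.Connected) (hr : r ∈ leafSet T) {M : Set W} (hrM : r ∉ M)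
    (hM : ∀ u ∈ M, parent hT r u ≠ r → (T.neighborSet (parent hT r u) \ {u}).Subsingleton) :
    Set.InjOn (parent hT r) M := by
  intro u hu w hw huw
  have hur : u ≠ r := ne_of_mem_of_not_mem hu hrM
  have hwr : w ≠ r := ne_of_mem_of_not_mem hw hrM
  have hu_adj := (adj_parent hT hur).symm
  have hw_adj := (adj_parent hT hwr).symm
  rw [← huw] at hw_adj
  by_cases hpu : parent hT r u = r
  · rw [hpu] at hu_adj hw_adj
    exact hr hu_adj hw_adj
  · by_contra hne
    refine parent_parent_ne hT hwr (huw ▸ hpu) ?_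
    rw [← huw]
    exact hM u hu hpu ⟨adj_parent hT hpu, parent_parent_ne hT hur hpu⟩ ⟨hw_adj, Ne.symm hne⟩

end Parent

section AttachLeaf

variable {W : Type*} {T : SimpleGraph W} {x u v : W}

/-- The graph obtained from `T` by attaching the new vertex `none` to the vertex `x`. -/
def attachLeaf (T : SimpleGraph W) (x : W) : SimpleGraph (Option W) :=
  T.map Function.Embedding.some ⊔ edge (some x) none

lemma attachLeaf_adj_some_some : (attachLeaf T x).Adj (some u) (some v) ↔ T.Adj u v := by
  rw [attachLeaf, sup_adj, map_adj]
  simp [edge_adj]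

lemma attachLeaf_adj_some_none : (attachLeaf T x).Adj (some u) none ↔ u = x := by
  rw [attachLeaf, sup_adj, map_adj]
  simp [edge_adj]

lemma isAcyclic_map {W' : Type*} (hT : T.IsAcyclic) (f : W ↪ W') : (T.map f).IsAcyclic := by
  rw [isAcyclic_iff_forall_adj_isBridge] at hT ⊢
  intro _ _ h
  obtain ⟨a, b, hab, rfl, rfl⟩ := (map_adj _ _ _ _).1 h
  have : Nonempty W := ⟨a⟩
  have hinv : Function.LeftInverse (Function.invFun f) f := Function.leftInverse_invFun f.injective
  let φ : (T.map f).deleteEdges {s(f a, f b)} →g T.deleteEdges {s(a, b)} :=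
    ⟨Function.invFun f, by
      intro _ _ h
      rw [deleteEdges_adj] at h
      obtain ⟨⟨u, v, huv, rfl, rfl⟩, hne⟩ := h.imp_left (map_adj _ _ _ _).1
      rw [hinv, hinv, deleteEdges_adj]
      exact ⟨huv, fun h => hne (congrArg (Sym2.map f) h)⟩⟩
  rw [isBridge_iff]
  intro h
  have hφ := h.map φ
  simp only [φ, RelHom.coeFn_mk, hinv _] at hφ
  exact isBridge_iff.1 (hT hab) hφ

lemma isTree_attachLeaf (hT : T.IsTree) (x : W) : (attachLeaf T x).IsTree := by
  have hnone : ¬ (T.map Function.Embedding.some).Reachable (some x) none := by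
    rintro ⟨P⟩
    obtain ⟨_, _, -, -, h⟩ :=
      (map_adj _ _ _ _).1 (P.adj_penultimate (Walk.not_nil_of_ne (Option.some_ne_none x)))
    exact Option.some_ne_none _ h
  refine ⟨connected_iff_exists_forall_reachable _ |>.2 ⟨some x, fun v => ?_⟩,
    IsAcyclic.sup_edge_of_not_reachable hnone (isAcyclic_map hT.isAcyclic _)⟩
  cases v with
  | none => exact (attachLeaf_adj_some_none.2 rfl).reachable
  | some v =>
    exact (hT.connected x v).map
      (⟨some, fun h => attachLeaf_adj_some_some.2 h⟩ : T →g attachLeaf T x)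

lemma leafSet_attachLeaf_subset (hxv : T.Adj x v) :
    leafSet (attachLeaf T x) ⊆ insert none (some '' (leafSet T \ {x})) := by
  rintro (- | u) hu
  · exact Or.inl rfl
  · refine Or.inr ⟨u, ⟨fun s hs t ht => ?_, ?_⟩, rfl⟩
    · exact Option.some_injective _
        (hu (attachLeaf_adj_some_some.2 hs) (attachLeaf_adj_some_some.2 ht))
    · rintro rfl
      have := hu (attachLeaf_adj_some_some.2 hxv) (attachLeaf_adj_some_none.2 rfl)
      simp at this

end AttachLeaf

section MaxOrder

variable {W : Type*} {G : SimpleGraph V} {k : ℕ} {T : SimpleGraph W} (f : W ↪ V)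

lemma ncard_neighborSet_comap {x : W} (h : G.neighborSet (f x) ⊆ Set.range f) :
    ((G.comap f).neighborSet x).ncard = (G.neighborSet (f x)).ncard := by
  rw [← Set.ncard_image_of_injective _ f.injective]
  exact congrArg Set.ncard (Set.image_preimage_eq_of_subset h)

variable [Finite V]

lemma bddAbove_ncard_verts_isKEndedTree (G : SimpleGraph V) (k : ℕ) :
    BddAbove {n | ∃ H : G.Subgraph, IsKEndedTree G k H ∧ H.verts.ncard = n} := by
  refine ⟨Nat.card V, ?_⟩
  rintro _ ⟨H, -, rfl⟩
  exact Set.ncard_le_card _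

lemma IsKEndedTree.ncard_verts_le {H : G.Subgraph} (hH : IsKEndedTree G k H) :
    H.verts.ncard ≤ maxKEndedOrder G k :=
  le_csSup (bddAbove_ncard_verts_isKEndedTree G k) ⟨H, hH, rfl⟩

lemma exists_isKEndedTree_ncard_verts_eq (h : maxKEndedOrder G k ≠ 0) :
    ∃ H : G.Subgraph, IsKEndedTree G k H ∧ H.verts.ncard = maxKEndedOrder G k := by
  refine Nat.sSup_mem (Set.nonempty_iff_ne_empty.2 fun hempty => h ?_)
    (bddAbove_ncard_verts_isKEndedTree G k)
  rw [maxKEndedOrder, hempty, csSup_empty, Nat.bot_eq_zero]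

lemma card_le_maxKEndedOrder_of_isTree (hTG : T ≤ G.comap f) (hT : T.IsTree)
    (hleaf : (leafSet T).ncard ≤ k) : Nat.card W ≤ maxKEndedOrder G k := by
  have : Finite W := .of_injective f f.injective
  let φ : Copy T G := ⟨⟨f, fun h => hTG h⟩, f.injective⟩
  have hverts : φ.toSubgraph.verts = Set.range f := Set.image_univ
  have hend : endVertexCount φ.toSubgraph ≤ (leafSet T).ncard := by
    rw [← Set.ncard_image_of_injective _ f.injective]
    refine Set.ncard_le_ncard ?_
    rintro v ⟨hv, hone⟩
    obtain ⟨a, rfl⟩ := hverts.le hv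
    refine ⟨a, fun s hs t ht => f.injective ?_, rfl⟩
    exact (Set.ncard_le_one_iff_subsingleton.1 hone.le) ⟨_, _, hs, rfl, rfl⟩ ⟨_, _, ht, rfl, rfl⟩
  have hH : IsKEndedTree G k φ.toSubgraph :=
    Or.inl ⟨φ.isoToSubgraph.isTree_iff.1 hT, hend.trans hleaf⟩
  simpa only [hverts, Set.ncard_range_of_injective f.injective] using hH.ncard_verts_le

lemma ncard_verts_le_maxKEndedOrder_of_isCycle (hk : 1 ≤ k) {a : V} {C : G.Walk a a}
    (hC : C.IsCycle) : C.toSubgraph.verts.ncard ≤ maxKEndedOrder G k :=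
  IsKEndedTree.ncard_verts_le <| Or.inr ⟨hk, C.toSubgraph_connected, Or.inr fun _ hv =>
    hC.ncard_neighborSet_toSubgraph_eq_two ((Walk.mem_verts_toSubgraph _).1 hv)⟩

lemma two_le_maxKEndedOrder_of_adj (hk : 1 ≤ k) {a b : V} (hab : G.Adj a b) :
    2 ≤ maxKEndedOrder G k := by
  have hcard : (G.subgraphOfAdj hab).verts.ncard = 2 := Set.ncard_pair hab.ne
  exact hcard.ge.trans <| IsKEndedTree.ncard_verts_le <|
    Or.inr ⟨hk, Subgraph.subgraphOfAdj_connected hab, Or.inl hcard.le⟩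

lemma card_le_maxKEndedOrder_of_spanning_isPath (hk : 1 ≤ k) {a b : W} (hTG : T ≤ G.comap f)
    {P : T.Walk a b} (hP : P.IsPath) (hspan : ∀ w, w ∈ P.support) (hnadj : ¬ T.Adj a b)
    (hab : G.Adj (f a) (f b)) : Nat.card W ≤ maxKEndedOrder G k := by
  let φ : T →g G := ⟨f, fun h => hTG h⟩
  have hC : (Walk.cons hab.symm (P.map φ)).IsCycle := by
    rw [Walk.cons_isCycle_iff, Walk.edges_map]
    refine ⟨hP.map f.injective, fun h => hnadj ?_⟩
    obtain ⟨e, he, hmap⟩ := List.mem_map.1 h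
    obtain rfl : e = s(b, a) := Sym2.map.injective f.injective hmap
    exact (P.adj_of_mem_edges he).symm
  have hrange : Set.range f ⊆ (Walk.cons hab.symm (P.map φ)).toSubgraph.verts := by
    rintro _ ⟨w, rfl⟩
    rw [Walk.mem_verts_toSubgraph, Walk.support_cons, Walk.support_map]
    exact List.mem_cons_of_mem _ (List.mem_map_of_mem (hspan w))
  rw [← Set.ncard_range_of_injective f.injective]
  exact (Set.ncard_le_ncard hrange).trans (ncard_verts_le_maxKEndedOrder_of_isCycle hk hC)

lemma card_le_maxKEndedOrder_of_adj_leaves (hk : 1 ≤ k) (hTG : T ≤ G.comap f) (hT : T.IsTree)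
    (hleaf : (leafSet T).ncard ≤ k + 1) {a b : W} (ha : a ∈ leafSet T) (hb : b ∈ leafSet T)
    (hab : G.Adj (f a) (f b)) : Nat.card W ≤ maxKEndedOrder G k := by
  have : Finite W := .of_injective f f.injective
  have hne : a ≠ b := fun h => hab.ne (congrArg f h)
  by_cases hTab : T.Adj a b
  · have huniv : Set.univ ⊆ {a, b} := fun w _ =>
      eq_or_eq_of_adj_of_mem_leafSet hT.connected.preconnected ha hb hTab w
    rw [← Set.ncard_univ]
    exact (Set.ncard_le_ncard huniv).trans
      ((Set.ncard_pair hne).le.trans (two_le_maxKEndedOrder_of_adj hk hab))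
  obtain ⟨P, hP⟩ := hT.connected.exists_isPath a b
  by_cases hspan : ∀ w, w ∈ P.support
  · exact card_le_maxKEndedOrder_of_spanning_isPath f hk hTG hP hspan hTab hab
  push Not at hspan
  obtain ⟨w, hw⟩ := hspan
  obtain ⟨c, d, hcd, hbranch⟩ := exists_branch_of_isPath hT.connected.preconnected hP hne ha hb hw
  refine card_le_maxKEndedOrder_of_isTree f (exchangeEdge_le hTG hab)
    (isTree_exchangeEdge hT hTab hP hcd) ?_
  have hsub : leafSet (exchangeEdge T a b c d) ⊆ insert d (leafSet T \ {a, b}) := by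
    intro v hv
    rcases leafSet_exchangeEdge_subset hT.connected.preconnected hne hTab hv with h | rfl | rfl
    · exact Or.inr h
    · exact absurd (subsingleton_neighborSet_sdiff_of_mem_leafSet_exchangeEdge hv) hbranch
    · exact Or.inl rfl
  have h_insert := (Set.ncard_le_ncard hsub).trans (Set.ncard_insert_le _ _)
  have h_sdiff := Set.ncard_sdiff_add_ncard_of_subset (Set.pair_subset ha hb)
  rw [Set.ncard_pair hne] at h_sdiff
  omega

lemma mem_leafSet_and_not_adj_of_maxKEndedOrder_lt (hk : 1 ≤ k) (hTG : T ≤ G.comap f)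
    (hT : T.IsTree) (hlt : maxKEndedOrder G k < Nat.card W) {v : W} {S : Set W} (hS : S.ncard ≤ k)
    (hleaf : leafSet T ⊆ insert v S) :
    v ∈ leafSet T ∧ ∀ y ∈ leafSet T, ¬ G.Adj (f v) (f y) := by
  have : Finite W := .of_injective f f.injective
  have hv : v ∈ leafSet T := by
    by_contra hv
    have hsub : leafSet T ⊆ S := (Set.subset_insert_iff_of_notMem hv).1 hleaf
    exact hlt.not_ge
      (card_le_maxKEndedOrder_of_isTree f hTG hT ((Set.ncard_le_ncard hsub).trans hS))
  have hcard : (leafSet T).ncard ≤ k + 1 :=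
    (Set.ncard_le_ncard hleaf).trans ((Set.ncard_insert_le _ _).trans (by omega))
  exact ⟨hv, fun y hy hvy => hlt.not_ge
    (card_le_maxKEndedOrder_of_adj_leaves f hk hTG hT hcard hv hy hvy)⟩

lemma neighborSet_subset_range_of_mem_leafSet (hTG : T ≤ G.comap f) (hT : T.IsTree)
    (hleaf : (leafSet T).ncard ≤ k) (hmax : maxKEndedOrder G k ≤ Nat.card W) {x v : W}
    (hx : x ∈ leafSet T) (hxv : T.Adj x v) : G.neighborSet (f x) ⊆ Set.range f := by
  have : Finite W := .of_injective f f.injective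
  intro w hw
  by_contra hwf
  let g : Option W ↪ V := Function.Embedding.optionElim f w hwf
  have hle : attachLeaf T x ≤ G.comap g := by
    refine sup_le ?_ ((edge_le_iff _).2 (Or.inr hw))
    rw [map_le_iff_le_comap]
    exact hTG
  have hcard : (leafSet (attachLeaf T x)).ncard ≤ (leafSet T).ncard := by
    refine (Set.ncard_le_ncard (leafSet_attachLeaf_subset hxv)).trans
      ((Set.ncard_insert_le _ _).trans ?_)
    rw [Set.ncard_image_of_injective _ (Option.some_injective _),
      Set.ncard_sdiff_singleton_add_one hx]
  have hlarger :=
    card_le_maxKEndedOrder_of_isTree g hle (isTree_attachLeaf hT x) (hcard.trans hleaf)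
  rw [Finite.card_option] at hlarger
  omega

lemma ncard_leafSet_coe_le_endVertexCount {H : G.Subgraph} (hH : H.coe.Preconnected)
    (hcard : 2 ≤ H.verts.ncard) : (leafSet H.coe).ncard ≤ endVertexCount H := by
  have : Nontrivial H.verts := Set.nontrivial_coe_sort.2 (Set.one_lt_ncard_iff_nontrivial.1 hcard)
  rw [← Set.ncard_image_of_injective _ Subtype.val_injective]
  refine Set.ncard_le_ncard ?_
  rintro _ ⟨v, hv, rfl⟩
  obtain ⟨w, hw⟩ := hH.exists_adj_of_nontrivial v
  refine ⟨v.2, Set.ncard_eq_one.2 ⟨w, Set.Subset.antisymm (fun s hs => ?_) ?_⟩⟩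
  · exact congrArg Subtype.val (@hv ⟨s, H.edge_vert (H.symm.symm _ _ hs)⟩ hs w hw)
  · rintro _ rfl
    exact hw

end MaxOrder

section CriticalTree

variable {W : Type*} {G : SimpleGraph V} {f : W ↪ V} {k : ℕ} {T : SimpleGraph W} {u v x y z : W}

/-- `T`, embedded in `G` by `f`, is a tree with at most `k + 1` leaves that has at least two
vertices more than a largest `k`-ended tree of `G`: the configuration that the degree condition
has to exclude. -/
structure IsCriticalTree (G : SimpleGraph V) (f : W ↪ V) (k : ℕ) (T : SimpleGraph W) : Prop where
  le_comap : T ≤ G.comap f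
  isTree : T.IsTree
  ncard_leafSet_le : (leafSet T).ncard ≤ k + 1
  add_one_lt_card : maxKEndedOrder G k + 1 < Nat.card W

/-- For leaves `x` and `y` of `T`, the `G`-neighbours of `x` together with the leaves other than
`x` and `y`. When `T` is rooted at `x`, the parent edge of each of these vertices is a candidate
for removal. -/
def pivotSet (G : SimpleGraph V) (f : W ↪ V) (T : SimpleGraph W) (x y : W) : Set W :=
  (G.comap f).neighborSet x ∪ leafSet T \ {x, y}

lemma notMem_pivotSet : x ∉ pivotSet G f T x y := by
  rintro (h | h)
  · exact h.ne rfl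
  · exact h.2 (Or.inl rfl)

namespace IsCriticalTree

variable [Finite V]

lemma ncard_leafSet_eq (hT : IsCriticalTree G f k T) : (leafSet T).ncard = k + 1 := by
  refine hT.ncard_leafSet_le.antisymm (Nat.lt_of_not_le fun h => ?_)
  have := card_le_maxKEndedOrder_of_isTree f hT.le_comap hT.isTree h
  have := hT.add_one_lt_card
  omega

lemma not_adj_of_mem_leafSet (hk : 1 ≤ k) (hT : IsCriticalTree G f k T) (hx : x ∈ leafSet T)
    (hy : y ∈ leafSet T) : ¬ G.Adj (f x) (f y) := fun h => by
  have := card_le_maxKEndedOrder_of_adj_leaves f hk hT.le_comap hT.isTree hT.ncard_leafSet_le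
    hx hy h
  have := hT.add_one_lt_card
  omega

lemma ncard_leafSet_sdiff_le (hT : IsCriticalTree G f k T) (hx : x ∈ leafSet T) :
    (leafSet T \ {x}).ncard ≤ k := by
  have : Finite W := .of_injective f f.injective
  rw [Set.ncard_sdiff_singleton_of_mem hx, hT.ncard_leafSet_eq, Nat.add_sub_cancel]

lemma subsingleton_and_not_adj_of_reroute (hk : 1 ≤ k) (hT : IsCriticalTree G f k T)
    (hx : x ∈ leafSet T) (hy : y ∈ leafSet T) (hyx : y ≠ x) {P : T.Walk x u} (hP : P.IsPath)
    (hvu : s(v, u) ∈ P.edges) (hxu : G.Adj (f x) (f u)) (hnadj : ¬ T.Adj x u) :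
    (T.neighborSet v \ {u}).Subsingleton ∧ ¬ G.Adj (f v) (f y) := by
  have hne : x ≠ u := fun h => hxu.ne (congrArg f h)
  have hu : u ∉ leafSet T := fun hu => hT.not_adj_of_mem_leafSet hk hx hu hxu
  obtain ⟨hv, hv_nadj⟩ := mem_leafSet_and_not_adj_of_maxKEndedOrder_lt f hk
    (exchangeEdge_le hT.le_comap hxu) (isTree_exchangeEdge hT.isTree hnadj hP hvu)
    (Nat.lt_of_succ_lt hT.add_one_lt_card) (hT.ncard_leafSet_sdiff_le hx)
    (leafSet_exchangeEdge_subset_insert hT.isTree.connected.preconnected hne hnadj hu)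
  exact ⟨subsingleton_neighborSet_sdiff_of_mem_leafSet_exchangeEdge hv,
    hv_nadj y (mem_leafSet_exchangeEdge hy hyx (ne_of_mem_of_not_mem hy hu))⟩

lemma subsingleton_and_not_adj_of_prune (hk : 1 ≤ k) (hT : IsCriticalTree G f k T)
    (hz : z ∈ leafSet T) (hy : y ∈ leafSet T) (hyz : y ≠ z) (hzv : T.Adj z v) :
    (T.neighborSet v \ {z}).Subsingleton ∧ ¬ G.Adj (f v) (f y) := by
  have : Finite W := .of_injective f f.injective
  have hlt : maxKEndedOrder G k < Nat.card ({z}ᶜ : Set W) := by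
    have := hT.add_one_lt_card
    rw [Nat.card_coe_set_eq, Set.ncard_compl, Set.ncard_singleton]
    omega
  have hS : ((↑) ⁻¹' (leafSet T \ {z}) : Set ({z}ᶜ : Set W)).ncard ≤ k := by
    rw [← Set.ncard_image_of_injective _ Subtype.val_injective]
    exact (Set.ncard_le_ncard (Set.image_preimage_subset _ _)).trans (hT.ncard_leafSet_sdiff_le hz)
  obtain ⟨hv, hv_nadj⟩ := mem_leafSet_and_not_adj_of_maxKEndedOrder_lt
    ((Function.Embedding.subtype (· ∈ ({z}ᶜ : Set W))).trans f) hk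
    (fun _ _ h => hT.le_comap h) (isTree_induce_compl_of_mem_leafSet hT.isTree hz hzv) hlt hS
    (leafSet_induce_compl_subset hz hzv)
  exact ⟨mem_leafSet_induce_compl_iff.1 hv,
    hv_nadj ⟨y, hyz⟩ (mem_leafSet_induce_compl_iff.2 (hy.anti Set.sdiff_subset))⟩

lemma subsingleton_and_not_adj_parent (hk : 1 ≤ k) (hT : IsCriticalTree G f k T)
    (hx : x ∈ leafSet T) (hy : y ∈ leafSet T) (hyx : y ≠ x) (hu : u ∈ pivotSet G f T x y)
    (hpu : parent hT.isTree.connected x u ≠ x) :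
    (T.neighborSet (parent hT.isTree.connected x u) \ {u}).Subsingleton ∧
      ¬ G.Adj (f (parent hT.isTree.connected x u)) (f y) := by
  have hux : u ≠ x := ne_of_mem_of_not_mem hu notMem_pivotSet
  rcases hu with hxu | ⟨hu, huxy⟩
  · obtain ⟨P, hP, hvu⟩ := exists_isPath_mem_edges_parent hT.isTree.connected hux
    exact hT.subsingleton_and_not_adj_of_reroute hk hx hy hyx hP hvu hxu fun h =>
      hpu (parent_eq_of_adj _ h.symm)
  · exact hT.subsingleton_and_not_adj_of_prune hk hu hy (fun h => huxy (Or.inr h.symm))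
      (adj_parent _ hux)

lemma disjoint_image_parent (hk : 1 ≤ k) (hT : IsCriticalTree G f k T) (hx : x ∈ leafSet T)
    (hy : y ∈ leafSet T) (hyx : y ≠ x) :
    Disjoint (parent hT.isTree.connected x '' pivotSet G f T x y)
      ((G.comap f).neighborSet y ∪ leafSet T \ {x}) := by
  refine Set.disjoint_left.2 ?_
  rintro _ ⟨u, hu, rfl⟩ h
  by_cases hpu : parent hT.isTree.connected x u = x
  · rw [hpu] at h
    rcases h with h | h
    · exact hT.not_adj_of_mem_leafSet hk hy hx h
    · exact h.2 rfl
  · rcases h with h | h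
    · exact (hT.subsingleton_and_not_adj_parent hk hx hy hyx hu hpu).2 (Adj.symm h)
    · exact parent_notMem_leafSet _ (ne_of_mem_of_not_mem hu notMem_pivotSet) hpu h.1

lemma disjoint_neighborSet_leafSet (hk : 1 ≤ k) (hT : IsCriticalTree G f k T)
    (hx : x ∈ leafSet T) : Disjoint ((G.comap f).neighborSet x) (leafSet T) :=
  Set.disjoint_left.2 fun _ hu hleaf => hT.not_adj_of_mem_leafSet hk hx hleaf hu

lemma ncard_neighborSet_add_le (hk : 1 ≤ k) (hT : IsCriticalTree G f k T) (hx : x ∈ leafSet T)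
    (hy : y ∈ leafSet T) (hyx : y ≠ x) :
    ((G.comap f).neighborSet x).ncard + ((G.comap f).neighborSet y).ncard + 2 * k ≤
      Nat.card W + 1 := by
  have : Finite W := .of_injective f f.injective
  have hinj : Set.InjOn (parent hT.isTree.connected x) (pivotSet G f T x y) :=
    injOn_parent _ hx notMem_pivotSet fun _ hu hpu =>
      (hT.subsingleton_and_not_adj_parent hk hx hy hyx hu hpu).1
  have hcard := Set.ncard_le_card (parent hT.isTree.connected x '' pivotSet G f T x y ∪
    ((G.comap f).neighborSet y ∪ leafSet T \ {x}))
  rw [Set.ncard_union_eq (hT.disjoint_image_parent hk hx hy hyx), hinj.ncard_image, pivotSet,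
    Set.ncard_union_eq ((hT.disjoint_neighborSet_leafSet hk hx).mono_right Set.sdiff_subset),
    Set.ncard_union_eq ((hT.disjoint_neighborSet_leafSet hk hy).mono_right Set.sdiff_subset),
    Set.ncard_sdiff_singleton_of_mem hx, Set.ncard_sdiff (Set.pair_subset hx hy),
    Set.ncard_pair hyx.symm, hT.ncard_leafSet_eq] at hcard
  omega

end IsCriticalTree

end CriticalTree

lemma minDegreeSum_two_le [Fintype V] {G : SimpleGraph V} [DecidableRel G.Adj] {x y : V}
    (hxy : x ≠ y) (hnadj : ¬ G.Adj x y) :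
    minDegreeSum G 2 ≤ (G.degree x + G.degree y : ℕ) := by
  classical
  have hind : IsIndSet G (({x, y} : Finset V) : Set V) := by
    rw [Finset.coe_pair]
    rintro u (rfl | rfl) v (rfl | rfl)
    · exact G.irrefl
    · exact hnadj
    · exact fun h => hnadj h.symm
    · exact G.irrefl
  refine (iInf₂_le ({x, y} : Finset V) ⟨Finset.card_pair hxy, hind⟩).trans ?_
  rw [Finset.sum_pair hxy, Nat.cast_add]

theorem corollary8_general [Fintype V] (G : SimpleGraph V) [DecidableRel G.Adj] {k : ℕ}
    (hk : 1 ≤ k)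
    (h : (maxKEndedOrder G (k + 1) : ℕ∞) + 2 ≤ minDegreeSum G 2 + ((2 * k : ℕ) : ℕ∞)) :
    maxKEndedOrder G (k + 1) ≤ maxKEndedOrder G k + 1 := by
  by_contra! hlt
  obtain ⟨H, hH, hcard⟩ := exists_isKEndedTree_ncard_verts_eq (Nat.ne_zero_of_lt hlt)
  rcases hH with ⟨hTree, hend⟩ | ⟨-, hcycle⟩
  swap
  · have := IsKEndedTree.ncard_verts_le (G := G) (k := k) (Or.inr ⟨hk, hcycle⟩)
    omega
  have hconn := hTree.connected.preconnected
  have hleaf := (ncard_leafSet_coe_le_endVertexCount hconn (by omega)).trans hend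
  let f : H.verts ↪ V := Function.Embedding.subtype _
  have hT : IsCriticalTree G f k H.coe :=
    ⟨fun _ _ h => H.adj_sub h, hTree, hleaf, by rwa [Nat.card_coe_set_eq, hcard]⟩
  obtain ⟨x, hx, y, hy, hxy⟩ :=
    (Set.one_lt_ncard).1 (hT.ncard_leafSet_eq ▸ Nat.lt_add_of_pos_left hk)
  have := nontrivial_of_ne x y hxy
  have hdeg {w : H.verts} (hw : w ∈ leafSet H.coe) :
      ((G.comap f).neighborSet w).ncard = G.degree (f w) := by
    obtain ⟨v, hwv⟩ := hconn.exists_adj_of_nontrivial w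
    rw [ncard_neighborSet_comap f (neighborSet_subset_range_of_mem_leafSet f hT.le_comap hTree hleaf
      (by rw [Nat.card_coe_set_eq, hcard]) hw hwv), ← Nat.card_coe_set_eq,
      Nat.card_eq_fintype_card, card_neighborSet_eq_degree]
  have hsum := hT.ncard_neighborSet_add_le hk hx hy hxy.symm
  rw [hdeg hx, hdeg hy, Nat.card_coe_set_eq, hcard] at hsum
  have hσ := minDegreeSum_two_le (f.injective.ne hxy) (hT.not_adj_of_mem_leafSet hk hx hy)
  have hsum' := h.trans (add_le_add_left hσ _)
  norm_cast at hsum'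
  omega

/-- **Corollary 8.** If `G` is connected and `σ_2 ≥ t_{k+1} - 2k + 2` for some
positive integer `k`, then `t_k ≥ t_{k+1} - 1`. -/
theorem corollary8 [Fintype V] (G : SimpleGraph V) [DecidableRel G.Adj]
    (hG : G.Connected) (k : ℕ) (hk : 1 ≤ k)
    (h : (maxKEndedOrder G (k + 1) : ℕ∞) + 2 ≤
      minDegreeSum G 2 + ((2 * k : ℕ) : ℕ∞)) :
    maxKEndedOrder G k + 1 ≥ maxKEndedOrder G (k + 1) :=
  corollary8_general G hk h
end

section
/- Let G be a connected graph of order n with σ_2 ≥ n − 2k + 2 for some positive integer k. Then G has a dominating k-ended tree. (Corollary 9) -/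
open SimpleGraph

variable {V : Type*}

/-!
A Hamiltonian cycle is a spanning 1-ended tree, so suppose that there is none. By Ore's argument the
ends of a longest path `P` are then non-adjacent and their degree sum is at most the length of `P`:
otherwise crossing chords would close `P` to a cycle, and by connectedness either this cycle is
Hamiltonian or opening it next to an edge leaving it gives a longer path. The degree condition thus
forces `P` to miss at most `2 (k - 2) + 1` vertices. As long as two of the missed vertices are
adjacent, connectedness allows a path on two new vertices to be hung on the tree, at the cost of at
most one new leaf. Starting from the two leaves of `P`, this stops after at most `k - 2` rounds with
a dominating tree.
-/

section Domination

variable {G : SimpleGraph V}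

theorem exists_adj_mem_notMem_of_preconnected (hG : G.Preconnected) {S : Set V}
    (hS : S.Nonempty) (hSc : Sᶜ.Nonempty) : ∃ v ∈ S, ∃ w ∉ S, G.Adj v w := by
  obtain ⟨a, ha⟩ := hS
  obtain ⟨b, hb⟩ := hSc
  obtain ⟨p⟩ := hG a b
  obtain ⟨d, -, hfst, hsnd⟩ := p.exists_boundary_dart S ha hb
  exact ⟨d.fst, hfst, d.snd, hsnd, d.adj⟩

theorem exists_adj_adj_of_not_isIndSet_compl (hG : G.Preconnected) {S : Set V}
    (hS : S.Nonempty) (hdom : ¬ IsIndSet G Sᶜ) :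
    ∃ v ∈ S, ∃ w ∉ S, ∃ x ∉ S, G.Adj v w ∧ G.Adj w x := by
  simp only [IsIndSet, not_forall, not_not] at hdom
  obtain ⟨a, ha, b, hb, hab⟩ := hdom
  obtain ⟨s, hs⟩ := hS
  -- No edge can leave the set of non-isolated vertices of `G - S` other than towards `S`.
  obtain ⟨w, ⟨hw, x, hx, hwx⟩, v, hv, hwv⟩ := exists_adj_mem_notMem_of_preconnected hG
    (S := {w | w ∉ S ∧ ∃ x, x ∉ S ∧ G.Adj w x}) ⟨a, ha, b, hb, hab⟩ ⟨s, fun h => h.1 hs⟩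
  have hvS : v ∈ S := by_contra fun h => hv ⟨h, w, hw, hwv.symm⟩
  exact ⟨v, hvS, w, hw, x, hx, hwv.symm, hwx⟩

theorem isIndSet_of_ncard_le_one {s : Set V} [Finite s] (hs : s.ncard ≤ 1) : IsIndSet G s :=
  fun _ hu _ hv huv => huv.ne (Set.ncard_le_one_iff_subsingleton.1 hs hu hv)

end Domination

section Trees

variable {G : SimpleGraph V} {H : G.Subgraph} {u v w x : V}

theorem isAcyclic_spanningCoe_of_isAcyclic_coe (hH : H.coe.IsAcyclic) :
    H.spanningCoe.IsAcyclic := by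
  intro a c hc
  have hsupp : ∀ y ∈ c.support, y ∈ H.verts := by
    intro y hy
    obtain ⟨z, hyz⟩ := mem_support_of_mem_walk_support c hc.not_nil hy
    exact H.edge_vert hyz
  rw [← c.map_induce hsupp] at hc
  exact hH (c.induce H.verts hsupp) hc.of_map

theorem isTree_coe_iff : H.coe.IsTree ↔ H.Connected ∧ H.spanningCoe.IsAcyclic :=
  ⟨fun h => ⟨Subgraph.connected_iff'.2 h.connected,
      isAcyclic_spanningCoe_of_isAcyclic_coe h.isAcyclic⟩,
    fun h => ⟨Subgraph.connected_iff'.1 h.1, h.2.embedding H.coeEmbeddingSpanningCoe⟩⟩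

theorem isTree_coe_sup_subgraphOfAdj (hH : H.coe.IsTree) (hv : v ∈ H.verts) (hw : w ∉ H.verts)
    (h : G.Adj v w) : (H ⊔ G.subgraphOfAdj h).coe.IsTree := by
  obtain ⟨hconn, hacyc⟩ := isTree_coe_iff.1 hH
  have hnr : ¬ H.spanningCoe.Reachable v w := by
    rintro ⟨p⟩
    cases p.reverse with
    | nil => exact h.ne rfl
    | cons hadj _ => exact hw (H.edge_vert hadj)
  refine isTree_coe_iff.2 ⟨?_, ?_⟩
  · exact Subgraph.connected_sup hconn.preconnected
      (Subgraph.subgraphOfAdj_connected h).preconnected ⟨v, hv, by simp⟩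
  · rw [Subgraph.sup_spanningCoe, Subgraph.spanningCoe_subgraphOfAdj]
    exact hacyc.sup_edge_of_not_reachable hnr

theorem isTree_coe_toSubgraph_of_isPath {p : G.Walk u v} (hp : p.IsPath) :
    p.toSubgraph.coe.IsTree := by
  induction p with
  | nil => exact IsTree.coe_singletonSubgraph G _
  | cons h q ih =>
    obtain ⟨hq, hu⟩ := (Walk.cons_isPath_iff h q).1 hp
    have := isTree_coe_sup_subgraphOfAdj (ih hq) q.start_mem_verts_toSubgraph
      (by rwa [Walk.mem_verts_toSubgraph]) h.symm
    rwa [subgraphOfAdj_symm, sup_comm] at this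

/-- The end-vertices of a subgraph `H`, that is, the set counted by `endVertexCount H`. -/
def endVertexSet (H : G.Subgraph) : Set V :=
  {v | v ∈ H.verts ∧ (H.neighborSet v).ncard = 1}

theorem ncard_endVertexSet (H : G.Subgraph) : (endVertexSet H).ncard = endVertexCount H :=
  rfl

theorem endVertexSet_toSubgraph_subset_of_isPath {p : G.Walk u v} (hp : p.IsPath) :
    endVertexSet p.toSubgraph ⊆ {u, v} := by
  rintro y ⟨hy, hdeg⟩
  obtain ⟨i, rfl, hi⟩ := Walk.mem_support_iff_exists_getVert.1 (p.mem_verts_toSubgraph.1 hy)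
  rcases Nat.eq_zero_or_pos i with rfl | hpos
  · simp
  rcases hi.eq_or_lt with rfl | hlt
  · simp
  · rw [hp.ncard_neighborSet_toSubgraph_internal_eq_two hpos.ne' hlt] at hdeg
    omega

theorem endVertexCount_toSubgraph_le_two_of_isPath {p : G.Walk u v} (hp : p.IsPath) :
    endVertexCount p.toSubgraph ≤ 2 := by
  rw [← ncard_endVertexSet]
  exact (Set.ncard_le_ncard (endVertexSet_toSubgraph_subset_of_isPath hp)).trans
    (Set.ncard_insert_le u {v} |>.trans (by simp))

theorem ncard_verts_toSubgraph_of_isPath {p : G.Walk u v} (hp : p.IsPath) :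
    p.toSubgraph.verts.ncard = p.length + 1 := by
  classical
  rw [Walk.verts_toSubgraph, ← p.length_support, ← List.toFinset_card_of_nodup hp.support_nodup,
    ← Set.ncard_coe_finset, List.coe_toFinset]

theorem endVertexSet_sup_subgraphOfAdj_subset (hH : H.Preconnected) (hn : H.verts.Nontrivial)
    (hv : v ∈ H.verts) (hw : w ∉ H.verts) (h : G.Adj v w) :
    endVertexSet (H ⊔ G.subgraphOfAdj h) ⊆ insert w (endVertexSet H \ {v}) := by
  rintro y ⟨hy, hdeg⟩
  obtain rfl | hyw := eq_or_ne y w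
  · exact Set.mem_insert _ _
  have hyH : y ∈ H.verts := by
    simp only [Subgraph.verts_sup, subgraphOfAdj_verts, Set.mem_union, Set.mem_insert_iff,
      Set.mem_singleton_iff] at hy
    rcases hy with hy | rfl | rfl
    exacts [hy, hv, absurd rfl hyw]
  have := hn.coe_sort
  obtain ⟨z, hyz : H.Adj y z⟩ := hH.exists_adj_of_nontrivial ⟨y, hyH⟩
  obtain ⟨z', hz'⟩ := Set.ncard_eq_one.1 hdeg
  have hle : H.neighborSet y ⊆ {z'} := hz' ▸ Set.subset_union_left
  obtain rfl : z = z' := hle hyz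
  have heq : H.neighborSet y = {z} := hle.antisymm (Set.singleton_subset_iff.2 hyz)
  refine Or.inr ⟨⟨hyH, Set.ncard_eq_one.2 ⟨z, heq⟩⟩, ?_⟩
  rintro rfl
  have hwz : w ∈ ({z} : Set V) := hz' ▸ Or.inr (by simp)
  exact hw (Set.mem_singleton_iff.1 hwz ▸ H.edge_vert hyz.symm)

theorem exists_isTree_coe_attach_two [Finite V] (hH : H.coe.IsTree) (hn : H.verts.Nontrivial)
    (hv : v ∈ H.verts) (hw : w ∉ H.verts) (hx : x ∉ H.verts) (hvw : G.Adj v w) (hwx : G.Adj w x) :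
    ∃ K : G.Subgraph, H ≤ K ∧ K.coe.IsTree ∧ K.vertsᶜ.ncard + 2 = H.vertsᶜ.ncard ∧
      endVertexCount K ≤ endVertexCount H + 1 := by
  let H' := H ⊔ G.subgraphOfAdj hvw
  let K := H' ⊔ G.subgraphOfAdj hwx
  have hw' : w ∈ H'.verts := by simp [H']
  have hx' : x ∉ H'.verts := by
    have hxv : x ≠ v := fun e => hx (e ▸ hv)
    simp [H', hx, hxv, hwx.ne']
  have hH' : H'.coe.IsTree := isTree_coe_sup_subgraphOfAdj hH hv hw hvw
  have hcompl : H.vertsᶜ = insert w (insert x K.vertsᶜ) := by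
    ext y
    simp only [K, H', Subgraph.verts_sup, subgraphOfAdj_verts]
    grind
  have hend : endVertexSet K ⊆ insert x (endVertexSet H) := by
    calc endVertexSet K ⊆ insert x (endVertexSet H' \ {w}) :=
          endVertexSet_sup_subgraphOfAdj_subset (isTree_coe_iff.1 hH').1.preconnected
            (hn.mono Set.subset_union_left) hw' hx' hwx
      _ ⊆ insert x (insert w (endVertexSet H \ {v}) \ {w}) := by
          gcongr
          exact endVertexSet_sup_subgraphOfAdj_subset (isTree_coe_iff.1 hH).1.preconnected
            hn hv hw hvw
      _ ⊆ insert x (endVertexSet H) := by grind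
  refine ⟨K, le_sup_left.trans le_sup_left, isTree_coe_sup_subgraphOfAdj hH' hw' hx' hwx, ?_, ?_⟩
  · rw [hcompl, Set.ncard_insert_of_notMem, Set.ncard_insert_of_notMem] <;> simp [K, hwx.ne]
  · rw [← ncard_endVertexSet, ← ncard_endVertexSet]
    exact (Set.ncard_le_ncard hend).trans (Set.ncard_insert_le _ _)

theorem exists_dominating_isTree_coe [Finite V] (hG : G.Preconnected) (hH : H.coe.IsTree)
    (hn : H.verts.Nontrivial) {m : ℕ} (hm : H.vertsᶜ.ncard ≤ 2 * m + 1) :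
    ∃ K : G.Subgraph, K.coe.IsTree ∧ endVertexCount K ≤ endVertexCount H + m ∧
      IsIndSet G K.vertsᶜ := by
  induction m generalizing H with
  | zero => exact ⟨H, hH, le_rfl, isIndSet_of_ncard_le_one hm⟩
  | succ m ih =>
    by_cases hdom : IsIndSet G H.vertsᶜ
    · exact ⟨H, hH, Nat.le_add_right _ _, hdom⟩
    obtain ⟨v, hv, w, hw, x, hx, hvw, hwx⟩ :=
      exists_adj_adj_of_not_isIndSet_compl hG hn.nonempty hdom
    obtain ⟨K, hHK, hK, hKcard, hKend⟩ := exists_isTree_coe_attach_two hH hn hv hw hx hvw hwx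
    obtain ⟨T, hT, hTend, hTdom⟩ := ih hK (hn.mono hHK.1) (by omega)
    exact ⟨T, hT, by omega, hTdom⟩

theorem exists_dominating_isTree_coe_of_isPath [Finite V] (hG : G.Preconnected) {p : G.Walk u v}
    (hp : p.IsPath) (huv : u ≠ v) {m : ℕ} (hm : Nat.card V ≤ p.length + 2 * m + 2) :
    ∃ T : G.Subgraph, T.coe.IsTree ∧ endVertexCount T ≤ m + 2 ∧ IsIndSet G T.vertsᶜ := by
  have hn : p.toSubgraph.verts.Nontrivial :=
    ⟨u, p.start_mem_verts_toSubgraph, v, p.end_mem_verts_toSubgraph, huv⟩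
  have hcompl : p.toSubgraph.vertsᶜ.ncard ≤ 2 * m + 1 := by
    have := Set.ncard_add_ncard_compl p.toSubgraph.verts
    rw [ncard_verts_toSubgraph_of_isPath hp] at this
    omega
  obtain ⟨T, hT, hTend, hTdom⟩ :=
    exists_dominating_isTree_coe hG (isTree_coe_toSubgraph_of_isPath hp) hn hcompl
  have hpend := endVertexCount_toSubgraph_le_two_of_isPath hp
  exact ⟨T, hT, by omega, hTdom⟩

end Trees

section LongestPath

variable {G : SimpleGraph V} {u v w : V} {p : G.Walk u v}

theorem exists_isPath_length_eq_of_isCycle_of_notMem_support (hG : G.Preconnected)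
    {c : G.Walk u u} (hc : c.IsCycle) (hw : w ∉ c.support) :
    ∃ (a b : V) (q : G.Walk a b), q.IsPath ∧ q.length = c.length := by
  classical
  obtain ⟨b, hb, x, hx, hbx⟩ := exists_adj_mem_notMem_of_preconnected hG
    (S := {y | y ∈ c.support}) ⟨u, c.start_mem_support⟩ ⟨w, hw⟩
  have hrot := hc.rotate hb
  have hx' : x ∉ (c.rotate b hb).dropLast.support := by
    rw [Walk.support_dropLast hrot.not_nil]
    exact fun h => hx ((Walk.mem_support_rotate_iff c b hb).1 (List.mem_of_mem_dropLast h))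
  refine ⟨_, _, Walk.cons hbx.symm _, hrot.isPath_dropLast.cons hx', ?_⟩
  rw [Walk.length_cons, Walk.length_dropLast_add_one hrot.not_nil, Walk.length_rotate]

theorem exists_isPath_length_eq_of_adj_getVert (hp : p.IsPath) {i : ℕ} (hi : i < p.length)
    (hv : G.Adj v (p.getVert i)) :
    ∃ q : G.Walk u (p.getVert (i + 1)), q.IsPath ∧ q.length = p.length := by
  -- The Pósa rotation `u … pᵢ v … pᵢ₊₁`, which trades the edge `pᵢ pᵢ₊₁` for the chord `v pᵢ`.
  let q := (p.take i).append (Walk.cons hv.symm (p.drop (i + 1)).reverse)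
  have hsupp : q.support = p.support.take (i + 1) ++ (p.support.drop (i + 1)).reverse := by
    simp only [q, Walk.support_append, Walk.support_cons, List.tail_cons, Walk.support_reverse,
      Walk.support_take, Walk.drop_support_eq_support_drop_min, min_eq_left (Nat.succ_le_of_lt hi)]
  have hperm : q.support.Perm p.support := by
    rw [hsupp]
    conv_rhs => rw [← List.take_append_drop (i + 1) p.support]
    exact (List.reverse_perm _).append_left _
  refine ⟨q, (Walk.isPath_def q).2 (hperm.nodup_iff.2 hp.support_nodup), ?_⟩
  simpa using hperm.length_eq

/-- A path that is at least as long as every other path of the graph. -/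
structure IsLongestPath (p : G.Walk u v) : Prop where
  isPath : p.IsPath
  length_le_of_isPath : ∀ ⦃a b : V⦄ (q : G.Walk a b), q.IsPath → q.length ≤ p.length

variable (G) in
theorem exists_isLongestPath [Nonempty V] [Finite G.edgeSet] :
    ∃ (u v : V) (p : G.Walk u v), IsLongestPath p := by
  obtain ⟨u, v, p, hp, hmax⟩ := Walk.exists_isPath_forall_isPath_length_le_length G
  exact ⟨u, v, p, hp, hmax⟩

namespace IsLongestPath

theorem of_length_eq (hp : IsLongestPath p) {a b : V} {q : G.Walk a b} (hq : q.IsPath)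
    (hlen : q.length = p.length) : IsLongestPath q :=
  ⟨hq, hlen ▸ hp.length_le_of_isPath⟩

theorem mem_support_of_adj_start (hp : IsLongestPath p) (h : G.Adj u w) : w ∈ p.support := by
  by_contra hw
  have := hp.length_le_of_isPath (Walk.cons h.symm p) (hp.isPath.cons hw)
  simp at this

theorem mem_support_of_adj_end (hp : IsLongestPath p) (h : G.Adj v w) : w ∈ p.support := by
  simpa using (hp.of_length_eq hp.isPath.reverse p.length_reverse).mem_support_of_adj_start h

theorem isHamiltonian_of_length_le_one [DecidableEq V] (hG : G.Preconnected)
    (hp : IsLongestPath p) (hlen : p.length ≤ 1) : p.IsHamiltonian := by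
  refine hp.isPath.isHamiltonian_of_mem fun w => ?_
  by_contra hw
  obtain ⟨c, hc, x, hx, hcx⟩ := exists_adj_mem_notMem_of_preconnected hG
    (S := {y | y ∈ p.support}) ⟨u, p.start_mem_support⟩ ⟨w, hw⟩
  obtain ⟨i, rfl, hi⟩ := Walk.mem_support_iff_exists_getVert.1 hc
  obtain rfl | rfl : i = 0 ∨ i = p.length := by omega
  · exact hx (hp.mem_support_of_adj_start (by simpa using hcx))
  · exact hx (hp.mem_support_of_adj_end (by simpa using hcx))

theorem two_le_length [Fintype V] (hG : G.Preconnected) (hp : IsLongestPath p)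
    (hV : 2 < Fintype.card V) : 2 ≤ p.length := by
  classical
  by_contra! hlen
  have := (hp.isHamiltonian_of_length_le_one hG (by omega)).length_eq
  omega

theorem isHamiltonian_of_adj [Fintype V] [DecidableEq V] (hG : G.Preconnected)
    (hp : IsLongestPath p) (hlen : 2 ≤ p.length) (h : G.Adj u v) : G.IsHamiltonian := by
  have hcycle : (Walk.cons h.symm p).IsCycle :=
    Walk.isCycle_iff_isPath_tail_and_le_length.2 ⟨by simpa using hp.isPath, by simpa using hlen⟩
  have hham : p.IsHamiltonian := by
    refine hp.isPath.isHamiltonian_of_mem fun w => by_contra fun hw => ?_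
    have hwc : w ∉ (Walk.cons h.symm p).support := by
      simpa [hw] using fun e : w = v => hw (e ▸ p.end_mem_support)
    obtain ⟨a, b, q, hq, hql⟩ :=
      exists_isPath_length_eq_of_isCycle_of_notMem_support hG hcycle hwc
    have := hp.length_le_of_isPath q hq
    simp [hql] at this
  exact fun _ => ⟨v, Walk.cons h.symm p,
    Walk.isHamiltonianCycle_iff_isCycle_and_support_count_tail_eq_one.2 ⟨hcycle, hham⟩⟩

theorem isHamiltonian_of_adj_getVert [Fintype V] [DecidableEq V] (hG : G.Preconnected)
    (hp : IsLongestPath p) (hlen : 2 ≤ p.length) {i : ℕ} (hi : i < p.length)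
    (hu : G.Adj u (p.getVert (i + 1))) (hv : G.Adj v (p.getVert i)) : G.IsHamiltonian := by
  obtain ⟨q, hq, hql⟩ := exists_isPath_length_eq_of_adj_getVert hp.isPath hi hv
  exact (hp.of_length_eq hq hql).isHamiltonian_of_adj hG (hql ▸ hlen) hu

theorem degree_start_le_card [G.LocallyFinite] [DecidableRel G.Adj] (hp : IsLongestPath p) :
    G.degree u ≤ ((Finset.range p.length).filter fun i => G.Adj u (p.getVert (i + 1))).card := by
  classical
  rw [← G.card_neighborFinset_eq_degree]
  refine (Finset.card_le_card fun w hw => ?_).trans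
    (Finset.card_image_le (f := fun i => p.getVert (i + 1)))
  rw [mem_neighborFinset] at hw
  obtain ⟨i, rfl, hi⟩ := Walk.mem_support_iff_exists_getVert.1 (hp.mem_support_of_adj_start hw)
  cases i with
  | zero => simp at hw
  | succ j => exact Finset.mem_image.2 ⟨j, by simpa [hw] using hi, rfl⟩

theorem degree_end_le_card [G.LocallyFinite] [DecidableRel G.Adj] (hp : IsLongestPath p) :
    G.degree v ≤ ((Finset.range p.length).filter fun i => G.Adj v (p.getVert i)).card := by
  classical
  rw [← G.card_neighborFinset_eq_degree]
  refine (Finset.card_le_card fun w hw => ?_).trans (Finset.card_image_le (f := p.getVert))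
  rw [mem_neighborFinset] at hw
  obtain ⟨i, rfl, hi⟩ := Walk.mem_support_iff_exists_getVert.1 (hp.mem_support_of_adj_end hw)
  obtain rfl | hlt := hi.eq_or_lt
  · simp at hw
  · exact Finset.mem_image.2 ⟨i, by simp [hw, hlt], rfl⟩

theorem degree_add_degree_le_length [G.LocallyFinite] (hp : IsLongestPath p)
    (hcross : ∀ i < p.length, G.Adj u (p.getVert (i + 1)) → ¬ G.Adj v (p.getVert i)) :
    G.degree u + G.degree v ≤ p.length := by
  classical
  have hdisj : Disjoint ((Finset.range p.length).filter fun i => G.Adj u (p.getVert (i + 1)))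
      ((Finset.range p.length).filter fun i => G.Adj v (p.getVert i)) :=
    Finset.disjoint_filter.2 fun i hi => hcross i (Finset.mem_range.1 hi)
  calc G.degree u + G.degree v
      ≤ _ := add_le_add hp.degree_start_le_card hp.degree_end_le_card
    _ = _ := (Finset.card_union_of_disjoint hdisj).symm
    _ ≤ (Finset.range p.length).card := Finset.card_le_card
        (Finset.union_subset (Finset.filter_subset _ _) (Finset.filter_subset _ _))
    _ = p.length := Finset.card_range _

theorem degree_add_degree_le_length_of_not_isHamiltonian [Fintype V] [DecidableEq V]
    [G.LocallyFinite] (hG : G.Preconnected) (hp : IsLongestPath p) (hlen : 2 ≤ p.length)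
    (hham : ¬ G.IsHamiltonian) : G.degree u + G.degree v ≤ p.length :=
  hp.degree_add_degree_le_length fun _ hi hu hv =>
    hham (hp.isHamiltonian_of_adj_getVert hG hlen hi hu hv)

end IsLongestPath

end LongestPath

section DegreeSum

variable [Fintype V] {G : SimpleGraph V} [DecidableRel G.Adj]

theorem minDegreeSum_two_le_s13 {u v : V} (hne : u ≠ v) (hadj : ¬ G.Adj u v) :
    minDegreeSum G 2 ≤ ((G.degree u + G.degree v : ℕ) : ℕ∞) := by
  classical
  have hind : IsIndSet G (({u, v} : Finset V) : Set V) := by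
    simp [IsIndSet, hadj, G.adj_comm v u]
  calc minDegreeSum G 2 ≤ ∑ a ∈ ({u, v} : Finset V), (G.degree a : ℕ∞) :=
        iInf₂_le _ ⟨Finset.card_pair hne, hind⟩
    _ = ((G.degree u + G.degree v : ℕ) : ℕ∞) := by rw [Finset.sum_pair hne, Nat.cast_add]

end DegreeSum

section SpanningCycle

variable {G : SimpleGraph V}

theorem isCycleSubgraph_top_of_card_le_two (hG : G.Connected) (hV : Nat.card V ≤ 2) :
    IsCycleSubgraph (⊤ : G.Subgraph) := by
  refine ⟨Subgraph.connected_iff'.2 (Subgraph.topIso.connected_iff.2 hG), Or.inl ?_⟩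
  rwa [Subgraph.verts_top, Set.ncard_univ]

theorem isCycleSubgraph_toSubgraph_of_isCycle {v : V} {c : G.Walk v v} (hc : c.IsCycle) :
    IsCycleSubgraph c.toSubgraph :=
  ⟨c.toSubgraph_connected, Or.inr fun _ hw =>
    hc.ncard_neighborSet_toSubgraph_eq_two (c.mem_verts_toSubgraph.1 hw)⟩

theorem exists_isCycleSubgraph_verts_eq_univ [Fintype V] [DecidableEq V] [Nontrivial V]
    (hG : G.IsHamiltonian) : ∃ C : G.Subgraph, IsCycleSubgraph C ∧ C.verts = Set.univ := by
  obtain ⟨v⟩ := hG.connected.nonempty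
  obtain ⟨c, hc⟩ := hG.exists_isHamiltonianCycle v
  exact ⟨c.toSubgraph, isCycleSubgraph_toSubgraph_of_isCycle hc.isCycle,
    Set.eq_univ_of_forall fun w => c.mem_verts_toSubgraph.2 (hc.mem_support w)⟩

end SpanningCycle

/-- **Corollary 9.** If `G` is connected of order `n` and `σ_2 ≥ n - 2k + 2` for
some positive integer `k`, then `G` has a dominating `k`-ended tree. -/
theorem corollary9 [Fintype V] (G : SimpleGraph V) [DecidableRel G.Adj]
    (hG : G.Connected) (k : ℕ) (hk : 1 ≤ k)
    (h : (Fintype.card V : ℕ∞) + 2 ≤ minDegreeSum G 2 + ((2 * k : ℕ) : ℕ∞)) :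
    ∃ H : G.Subgraph, IsKEndedTree G k H ∧ IsIndSet G H.vertsᶜ := by
  classical
  by_cases hspan : ∃ C : G.Subgraph, IsCycleSubgraph C ∧ C.verts = Set.univ
  · obtain ⟨C, hC, hverts⟩ := hspan
    exact ⟨C, Or.inr ⟨hk, hC⟩, by simp [hverts, IsIndSet]⟩
  have hcard : 2 < Fintype.card V := by
    by_contra! hle
    exact hspan ⟨⊤, isCycleSubgraph_top_of_card_le_two hG (by simpa using hle), rfl⟩
  have : Nontrivial V := Fintype.one_lt_card_iff_nontrivial.1 (by omega)
  have hham : ¬ G.IsHamiltonian := fun hG' => hspan (exists_isCycleSubgraph_verts_eq_univ hG')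
  obtain ⟨u, v, p, hp⟩ := exists_isLongestPath G
  have hlen : 2 ≤ p.length := hp.two_le_length hG.preconnected hcard
  have hne : u ≠ v := hp.isPath.nil_iff_eq.not.1 (Walk.not_nil_iff_lt_length.2 (by omega))
  have hadj : ¬ G.Adj u v := fun huv => hham (hp.isHamiltonian_of_adj hG.preconnected hlen huv)
  have hdeg := hp.degree_add_degree_le_length_of_not_isHamiltonian hG.preconnected hlen hham
  have hsum : Fintype.card V + 2 ≤ G.degree u + G.degree v + 2 * k := by
    exact_mod_cast h.trans (add_le_add_left (minDegreeSum_two_le_s13 hne hadj) _)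
  have hlt : p.length < Fintype.card V := hp.isPath.length_lt
  obtain ⟨T, hT, hTend, hTdom⟩ := exists_dominating_isTree_coe_of_isPath hG.preconnected
    hp.isPath hne (m := k - 2) (by rw [Nat.card_eq_fintype_card]; omega)
  exact ⟨T, Or.inl ⟨hT, by omega⟩, hTdom⟩
end
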